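/- Let G₁, G₂ ⊆ ℂⁿ be bounded complete n-circled domains, and suppose that for every k ∈ M there is ρ(k) ∈ (ℝ_{>0})ⁿ such that P(ρ(k)) ⊆ G₁ and |z^k| ≤ ρ(k)^k for every z ∈ G₁. Assume every function holomorphic on G₁ admits a monomial expansion, i.e. for every f holomorphic on G₁ there is c : ℕⁿ → ℂ such that for all z ∈ G₁ the family (c_m z^m)_{m∈ℕⁿ} is absolutely summable with sum f(z). For each k ∈ M let A_k : ((Fin n → ℂ) → ℂ) →ₗ[ℂ] ((Fin n → ℂ) → ℂ) be a ℂ-linear map such that A_k f is holomorphic on G₂ whenever f is holomorphic on P(ρ(k)), and suppose that for every t ∈ (0,1) there exist C > 0 and s ∈ (0,1) such that for every k ∈ M and every f holomorphic on P(ρ(k)): ‖A_k f‖_{t•closure(G₂)} ≤ C · ‖f‖_{s•closure(P(ρ(k)))}. Then there exists a ℂ-linear map A : ((Fin n → ℂ) → ℂ) →ₗ[ℂ] ((Fin n → ℂ) → ℂ) such that: (i) for every f holomorphic on G₁, A f is holomorphic on G₂; (ii) for every t ∈ (0,1) there exist C' > 0 and r ∈ (0,1) with ‖A f‖_{t•closure(G₂)}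 ≤ C' ‖f‖_{r•closure(G₁)} for every f holomorphic on G₁; and (iii) for every k ∈ M and every f holomorphic on G₁ for which there exists c : ℕ → ℂ with (c_l · z^{l·k})_{l ≥ 1} absolutely summable with sum f(z) for all z ∈ G₁, one has A f = A_k f on G₂. -/

import Mathlib

open scoped Pointwise
open MeasureTheory UnitAddTorus in
lemma coeff_bound {n : ℕ} (a : (Fin n → ℕ) → ℂ) (ha : Summable (fun m => ‖a m‖)) (N : ℝ)
    (hN : ∀ θ : UnitAddTorus (Fin n), ‖∑' m, a m * ∏ j, (fourier 1 (θ j) : ℂ) ^ m j‖ ≤ N)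
    (m : Fin n → ℕ) : ‖a m‖ ≤ N := by
  have hN0 : 0 ≤ N := (norm_nonneg _).trans (hN 0)
  let _ : MeasureSpace UnitAddCircle := ⟨AddCircle.haarAddCircle⟩
  have _ : IsProbabilityMeasure (volume : Measure UnitAddCircle) :=
    inferInstanceAs (IsProbabilityMeasure AddCircle.haarAddCircle)
  let e : (Fin n → ℕ) → (Fin n → ℤ) := fun m j => (m j : ℤ)
  have he : Function.Injective e := fun p q h => by
    funext j; have := congrFun h j; simpa [e] using this
  let g : (Fin n → ℕ) → C(UnitAddTorus (Fin n), ℂ) := fun m => a m • mFourier (e m)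
  have hg : Summable g := by
    refine Summable.of_norm ?_
    simpa [g, norm_smul, mFourier_norm] using ha
  have hval : ∀ θ, (∑' m, g m) θ = ∑' m, a m * ∏ j, (fourier 1 (θ j) : ℂ) ^ m j := by
    intro θ
    rw [← ContinuousMap.tsum_apply hg]
    refine tsum_congr fun p => ?_
    simp [g, mFourier, e, fourier_apply, AddCircle.toCircle_nsmul]
  have hgN : ‖∑' m, g m‖ ≤ N := by
    rw [ContinuousMap.norm_le _ hN0]
    intro θ
    rw [hval]; exact hN θ
  have ho := orthonormal_mFourier (d := Fin n)
  let L := ContinuousMap.toLp (E := ℂ) 2 (volume : Measure (UnitAddTorus (Fin n))) ℂ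
  have h1 : HasSum (fun p => L (g p)) (L (∑' m, g m)) := hg.hasSum.mapL L
  have h2 := h1.mapL (innerSL ℂ (mFourierLp (d := Fin n) 2 (e m)))
  have h3 : (innerSL ℂ (mFourierLp (d := Fin n) 2 (e m))) (L (∑' m, g m)) = a m := by
    refine h2.unique ?_
    refine (hasSum_ite_eq m (a m)).congr_fun fun p => ?_
    simp only [g, L, map_smul, innerSL_apply_apply, smul_eq_mul]
    have := (orthonormal_iff_ite.mp ho) (e m) (e p)
    rw [show (ContinuousMap.toLp (E := ℂ) 2 (volume : Measure (UnitAddTorus (Fin n))) ℂ) (mFourier (e p)) = mFourierLp 2 (e p) from rfl]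
    rw [this]
    by_cases h : p = m
    · simp [h]
    · simp [h, he.eq_iff, Ne.symm h]
  rw [← h3, innerSL_apply_apply]
  refine (norm_inner_le_norm _ _).trans ?_
  rw [ho.1, one_mul]
  refine (L.le_opNorm _).trans ?_
  have : ‖L‖ ≤ 1 := by
    refine (ContinuousMap.toLp_norm_le _).trans ?_
    simp [measureUnivNNReal]
  nlinarith [norm_nonneg (∑' m, g m), norm_nonneg L]

lemma differentiableOn_tsum_local {ι : Type*} {n : ℕ} (F : ι → (Fin n → ℂ) → ℂ)
    (U : Set (Fin n → ℂ)) (hF : ∀ i, DifferentiableOn ℂ (F i) U)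
    (hloc : ∀ z ∈ U, ∃ V ⊆ U, IsOpen V ∧ z ∈ V ∧ ∃ u : ι → ℝ, Summable u ∧
      ∀ i, ∀ w ∈ V, ‖F i w‖ ≤ u i) :
    DifferentiableOn ℂ (fun z => ∑' i, F i z) U := by
  intro z hz
  obtain ⟨V, hVU, hV, hzV, u, hu, hb⟩ := hloc z hz
  obtain ⟨δ, hδ, hball⟩ := Metric.isOpen_iff.1 hV z hzV
  have hsub : ∀ x ∈ Metric.ball z (δ/2), Metric.ball x (δ/2) ⊆ V := fun x hx => 
    (Metric.ball_subset_ball' (by rw [Metric.mem_ball] at hx; linarith)).trans hball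
  have hd : ∀ i, ∀ x ∈ V, DifferentiableAt ℂ (F i) x := fun i x hx =>
    ((hF i).mono hVU).differentiableAt (hV.mem_nhds hx)
  refine (hasFDerivAt_tsum_of_isPreconnected (𝕜 := ℂ) (f := F) (f' := fun i x => fderiv ℂ (F i) x)
    (u := fun i => (2 * u i) / (δ/2)) (s := Metric.ball z (δ/2)) (x₀ := z) (x := z)
    ((hu.mul_left 2).div_const _) Metric.isOpen_ball
    (convex_ball z _).isPreconnected ?_ ?_ (Metric.mem_ball_self (by positivity)) ?_
    (Metric.mem_ball_self (by positivity))).differentiableAt.differentiableWithinAt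
  · intro i x hx
    exact (hd i x (hsub x hx (Metric.mem_ball_self (by positivity)))).hasFDerivAt
  · intro i x hx
    have hxV := hsub x hx (Metric.mem_ball_self (by positivity))
    refine Complex.norm_fderiv_le_div_of_mapsTo_ball
      (((hF i).mono hVU).mono (hsub x hx)) ?_ (by positivity)
    intro y hy
    have := hb i y (hsub x hx hy)
    have h2 := hb i x hxV
    simp only [Metric.mem_closedBall, dist_eq_norm]
    linarith [norm_sub_le (F i y) (F i x)]
  · exact Summable.of_norm_bounded hu (fun i => hb i z hzV)

lemma summable_geom_multi (n : ℕ) (r : ℝ) (h0 : 0 ≤ r) (h1 : r < 1) :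
    Summable (fun m : Fin n → ℕ => r ^ (∑ j, m j)) := by
  induction n with
  | zero => exact Summable.of_finite
  | succ n ih =>
    rw [← (Fin.consEquiv (fun _ : Fin (n+1) => ℕ)).summable_iff]
    have := (summable_geometric_of_lt_one h0 h1).mul_of_nonneg ih
      (fun _ => by positivity) (fun _ => by positivity)
    refine this.congr fun p => ?_
    simp [Fin.consEquiv, Fin.sum_univ_succ, pow_add]

lemma smul_closure_sub_dom {n : ℕ} {G : Set (Fin n → ℂ)}
    (hcirc : ∀ z ∈ G, ∀ w : Fin n → ℂ, (∀ j, ‖w j‖ ≤ ‖z j‖) → w ∈ G) {r : ℝ}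
    (hr : r ∈ Set.Ioo (0:ℝ) 1) : r • closure G ⊆ G := by
  rintro _ ⟨z, hz, rfl⟩
  have : ∀ᶠ w in nhds z, ∀ j, ‖(r • z) j‖ ≤ ‖w j‖ := by
    rw [Filter.eventually_all]
    intro j
    by_cases h : z j = 0
    · simp [h]
    · have hlt : ‖(r • z) j‖ < ‖z j‖ := by
        simp only [Pi.smul_apply, norm_smul, Real.norm_eq_abs, abs_of_pos hr.1]
        have := norm_pos_iff.2 h
        nlinarith [hr.2]
      have hc : Continuous (fun w : Fin n → ℂ => ‖w j‖) := by fun_prop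
      exact (hc.continuousAt.eventually (lt_mem_nhds hlt)).mono fun w hw => le_of_lt hw
  obtain ⟨w, hw, hwG⟩ := ((mem_closure_iff_frequently.1 hz).and_eventually this).exists
  exact hcirc w hw _ hwG

lemma exists_bigger {n : ℕ} {G : Set (Fin n → ℂ)} (hop : IsOpen G)
    (hcirc : ∀ z ∈ G, ∀ w : Fin n → ℂ, (∀ j, ‖w j‖ ≤ ‖z j‖) → w ∈ G) {z : Fin n → ℂ}
    (hz : z ∈ G) : ∃ x : Fin n → ℝ, (∀ j, ‖z j‖ < x j) ∧ (fun j => (x j : ℂ)) ∈ G := by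
  have h0 : (fun j => ((‖z j‖ + 0 : ℝ) : ℂ)) ∈ G := hcirc z hz _ (by simp)
  have hc : Continuous (fun ε : ℝ => fun j => ((‖z j‖ + ε : ℝ) : ℂ)) := by fun_prop
  have hev := hc.continuousAt.eventually (hop.mem_nhds h0)
  obtain ⟨ε, h1, h2⟩ := ((hev.filter_mono nhdsWithin_le_nhds).and
    (self_mem_nhdsWithin (s := Set.Ioi (0:ℝ)))).exists
  exact ⟨fun j => ‖z j‖ + ε, fun j => by simpa using h2, h1⟩

lemma exists_smul {n : ℕ} {G : Set (Fin n → ℂ)} (hop : IsOpen G) {z : Fin n → ℂ}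
    (hz : z ∈ G) : ∃ t ∈ Set.Ioo (0:ℝ) 1, z ∈ t • G := by
  have hc : ContinuousAt (fun t : ℝ => t⁻¹ • z) 1 := by
    refine ContinuousAt.smul (continuousAt_inv₀ one_ne_zero) continuousAt_const
  have hev := hc.eventually (hop.mem_nhds (by simpa using hz))
  obtain ⟨t, h1, h2⟩ := ((hev.filter_mono nhdsWithin_le_nhds).and
    (Ioo_mem_nhdsLT (show (0:ℝ) < 1 by norm_num))).exists
  exact ⟨t, h2, (Set.mem_smul_set_iff_inv_smul_mem₀ h2.1.ne' _ _).2 h1⟩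

lemma le_biSup_aux {α : Type*} {S : Set α} {f : α → ℝ} 
    (hb : ∃ C, ∀ x ∈ S, f x ≤ C) {z : α} (hz : z ∈ S) : f z ≤ ⨆ x ∈ S, f x := by
  obtain ⟨C, hC⟩ := hb
  have : BddAbove (Set.range fun x => ⨆ _ : x ∈ S, f x) := by
    refine ⟨max C 0, ?_⟩
    rintro _ ⟨x, rfl⟩
    exact Real.iSup_le (fun h => (hC x h).trans (le_max_left _ _)) (le_max_right _ _)
  refine le_trans ?_ (le_ciSup this z)
  simp [hz]

lemma biSup_le_aux {α : Type*} {S : Set α} {f : α → ℝ} {C : ℝ} (hC : 0 ≤ C)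
    (h : ∀ x ∈ S, f x ≤ C) : ⨆ x ∈ S, f x ≤ C :=
  Real.iSup_le (fun x => Real.iSup_le (fun hx => h x hx) hC) hC

lemma bdd_on {n : ℕ} {G : Set (Fin n → ℂ)} (hbd : Bornology.IsBounded G)
    (hcirc : ∀ z ∈ G, ∀ w : Fin n → ℂ, (∀ j, ‖w j‖ ≤ ‖z j‖) → w ∈ G) {r : ℝ}
    (hr : r ∈ Set.Ioo (0:ℝ) 1) {f : (Fin n → ℂ) → ℂ} (hf : DifferentiableOn ℂ f G) :
    ∃ C, ∀ x ∈ r • closure G, ‖f x‖ ≤ C := by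
  have hcomp : IsCompact (r • closure G) := hbd.isCompact_closure.smul r
  exact hcomp.exists_bound_of_continuousOn (hf.continuousOn.mono (smul_closure_sub_dom hcirc hr))

lemma cauchy_bound {n : ℕ} {G : Set (Fin n → ℂ)}
    (hcirc : ∀ z ∈ G, ∀ w : Fin n → ℂ, (∀ j, ‖w j‖ ≤ ‖z j‖) → w ∈ G)
    {c : (Fin n → ℕ) → ℂ} {f : (Fin n → ℂ) → ℂ}
    (hc : ∀ z ∈ G, HasSum (fun m : Fin n → ℕ => c m * ∏ j, z j ^ m j) (f z))
    {x : Fin n → ℝ} (hx0 : ∀ j, 0 ≤ x j) (hx : (fun j => (x j : ℂ)) ∈ G) {N : ℝ}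
    (hN : ∀ w : Fin n → ℂ, (∀ j, ‖w j‖ = x j) → ‖f w‖ ≤ N) (m : Fin n → ℕ) :
    ‖c m‖ * ∏ j, x j ^ m j ≤ N := by
  have key := coeff_bound (fun m => c m * ∏ j, (x j : ℂ) ^ m j) (hc _ hx).summable.norm N ?_ m
  · simpa [abs_of_nonneg, hx0] using key
  · intro θ
    have hw : ∀ j, ‖(x j : ℂ) * fourier 1 (θ j)‖ = x j := by
      intro j
      rw [norm_mul, fourier_apply, Circle.norm_coe]
      simp [abs_of_nonneg (hx0 j)]
    have h1 := hN (fun j => (x j : ℂ) * fourier 1 (θ j)) hw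
    have h2 := hc (fun j => (x j : ℂ) * fourier 1 (θ j)) (hcirc _ hx _ fun j => by
      rw [hw]; simp [abs_of_nonneg (hx0 j)])
    rw [← h2.tsum_eq] at h1
    simpa only [mul_pow, Finset.prod_mul_distrib, mul_assoc] using h1

lemma coeff_unique {n : ℕ} {G : Set (Fin n → ℂ)} (hop : IsOpen G) (hne : G.Nonempty)
    (hcirc : ∀ z ∈ G, ∀ w : Fin n → ℂ, (∀ j, ‖w j‖ ≤ ‖z j‖) → w ∈ G)
    {c d : (Fin n → ℕ) → ℂ} {f : (Fin n → ℂ) → ℂ}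
    (hc : ∀ z ∈ G, HasSum (fun m : Fin n → ℕ => c m * ∏ j, z j ^ m j) (f z))
    (hd : ∀ z ∈ G, HasSum (fun m : Fin n → ℕ => d m * ∏ j, z j ^ m j) (f z)) : c = d := by
  obtain ⟨z, hz⟩ := hne
  obtain ⟨x, hx1, hx⟩ := exists_bigger hop hcirc hz
  have hx0 : ∀ j, 0 < x j := fun j => (norm_nonneg _).trans_lt (hx1 j)
  have hcd : ∀ z ∈ G, HasSum (fun m : Fin n → ℕ => (c - d) m * ∏ j, z j ^ m j)
      ((fun _ => 0 : (Fin n → ℂ) → ℂ) z) := by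
    intro z hz
    simpa [sub_mul] using (hc z hz).sub (hd z hz)
  funext m
  have := cauchy_bound hcirc hcd (fun j => (hx0 j).le) hx (N := 0) (by simp) m
  have hp : 0 < ∏ j, x j ^ m j := Finset.prod_pos fun j _ => pow_pos (hx0 j) _
  have h0 : ‖(c - d) m‖ = 0 := by
    have := norm_nonneg ((c - d) m)
    by_contra h
    have h' : 0 < ‖(c - d) m‖ := lt_of_le_of_ne this (Ne.symm h)
    nlinarith [mul_pos h' hp]
  exact sub_eq_zero.1 (norm_eq_zero.1 h0)

lemma mul_inj {n : ℕ} {k : Fin n → ℕ} (hk : k ≠ 0) :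
    Function.Injective (fun l : ℕ => fun j => (l + 1) * k j) := by
  obtain ⟨j, hj⟩ := Function.ne_iff.1 hk
  intro a b h
  have := congrFun h j
  simp only at this
  have := Nat.eq_of_mul_eq_mul_right (Nat.pos_of_ne_zero hj) this
  omega

lemma mul_prim {n : ℕ} {k k' : Fin n → ℕ} (hk : Finset.univ.gcd k = 1)
    (hk' : Finset.univ.gcd k' = 1) {l l' : ℕ}
    (h : (fun j => (l + 1) * k j) = fun j => (l' + 1) * k' j) : k = k' := by
  have h1 := Finset.gcd_mul_left (s := Finset.univ) (f := k) (a := l + 1)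
  have h2 := Finset.gcd_mul_left (s := Finset.univ) (f := k') (a := l' + 1)
  rw [h, h2, hk, hk'] at h1
  simp at h1
  subst h1
  funext j
  exact Nat.eq_of_mul_eq_mul_left (Nat.succ_pos _) (congrFun h j)

/-- the part of the expansion along `k` -/
noncomputable def part {n : ℕ} (c : (Fin n → ℕ) → ℂ) (k : Fin n → ℕ) (z : Fin n → ℂ) : ℂ :=
  ∑' l : ℕ, c (fun j => (l + 1) * k j) * ∏ j, z j ^ ((l + 1) * k j)

lemma part_diff {n : ℕ} {G : Set (Fin n → ℂ)} (hop : IsOpen G)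
    (hcirc : ∀ z ∈ G, ∀ w : Fin n → ℂ, (∀ j, ‖w j‖ ≤ ‖z j‖) → w ∈ G)
    {c : (Fin n → ℕ) → ℂ} {f : (Fin n → ℂ) → ℂ}
    (hc : ∀ z ∈ G, HasSum (fun m : Fin n → ℕ => c m * ∏ j, z j ^ m j) (f z))
    {k : Fin n → ℕ} (hk : k ≠ 0) : DifferentiableOn ℂ (part c k) G := by
  apply differentiableOn_tsum_local
  · intro l
    refine Differentiable.differentiableOn ?_
    refine (differentiable_const _).mul ?_
    fun_prop
  · intro z hz
    obtain ⟨x, hx1, hx⟩ := exists_bigger hop hcirc hz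
    have hx0 : ∀ j, 0 < x j := fun j => (norm_nonneg _).trans_lt (hx1 j)
    have hle : ∀ w ∈ {w : Fin n → ℂ | ∀ j, ‖w j‖ < x j}, ∀ j, ‖w j‖ ≤ ‖(x j : ℂ)‖ := by
      intro w hw j
      simpa [abs_of_pos (hx0 j)] using (hw j).le
    refine ⟨{w | ∀ j, ‖w j‖ < x j}, fun w hw => hcirc _ hx _ (hle w hw), ?_, hx1,
      _, ((hc _ hx).summable.norm.comp_injective (mul_inj hk)), ?_⟩
    · rw [Set.ofPred_forall]
      exact isOpen_iInter_of_finite fun j => isOpen_lt (by fun_prop) continuous_const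
    · intro l w hw
      simp only [Function.comp, norm_mul, norm_prod, norm_pow]
      gcongr with j _
      exact hle w hw j

lemma part_bound {n : ℕ} {c : (Fin n → ℕ) → ℂ} {k : Fin n → ℕ} (hk : k ≠ 0) {x : Fin n → ℝ}
    {r N : ℝ} (hr : r ∈ Set.Ioo (0:ℝ) 1) (hN0 : 0 ≤ N)
    (hN : ∀ m : Fin n → ℕ, ‖c m‖ * ∏ j, (r * x j) ^ m j ≤ N) {z : Fin n → ℂ}
    (hz : ∀ j, ‖z j‖ ≤ (r * r) * x j) :
    ‖part c k z‖ ≤ N * (r ^ (∑ j, k j) * (1 - r)⁻¹) := by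
  have hr0 := hr.1.le
  have hK : 1 ≤ ∑ j, k j := by
    obtain ⟨j, hj⟩ := Function.ne_iff.1 hk
    exact (Nat.pos_of_ne_zero hj).trans_le (Finset.single_le_sum (fun _ _ => Nat.zero_le _) (Finset.mem_univ j))
  refine tsum_of_norm_bounded (((hasSum_geometric_of_lt_one hr0 hr.2).mul_left _).mul_left _) ?_
  intro l
  set m : Fin n → ℕ := fun j => (l + 1) * k j with hm
  have h1 : ‖c m * ∏ j, z j ^ ((l + 1) * k j)‖ ≤ ‖c m‖ * ∏ j, (r * r * x j) ^ m j := by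
    simp only [norm_mul, norm_prod, norm_pow]
    gcongr with j _
    exact hz j
  have h2 : ∏ j, (r * r * x j) ^ m j = r ^ (∑ j, m j) * ∏ j, (r * x j) ^ m j := by
    rw [← Finset.prod_pow_eq_pow_sum, ← Finset.prod_mul_distrib]
    refine Finset.prod_congr rfl fun j _ => ?_
    rw [mul_assoc, mul_pow]
  have h3 : r ^ (∑ j, m j) ≤ r ^ (∑ j, k j) * r ^ l := by
    rw [← pow_add]
    refine pow_le_pow_of_le_one hr0 hr.2.le ?_
    rw [hm, ← Finset.mul_sum]
    nlinarith
  calc _ ≤ _ := h1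
    _ = (‖c m‖ * ∏ j, (r * x j) ^ m j) * r ^ (∑ j, m j) := by rw [h2]; ring
    _ ≤ N * (r ^ (∑ j, k j) * r ^ l) :=
      mul_le_mul (hN m) h3 (by positivity) hN0

/-- Theorem 4.9: gluing a family of operators. Given bounded complete
`n`-circled domains `G₁, G₂`, polyradii `ρ(k)` with `P(ρ(k)) ⊆ G₁` and
`|z^k| ≤ ρ(k)^k` on `G₁` for each `k ∈ M`, and linear operators `A_k` mapping
functions holomorphic on `P(ρ(k))` to functions holomorphic on `G₂` with the uniform
bounds `‖A_k f‖_{t•cl G₂} ≤ C ‖f‖_{s•cl P(ρ(k))}`, there is a bounded linear operator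
`A : H(G₁) → H(G₂)` whose restriction to each `H_k(G₁)` agrees with `A_k`. -/
theorem stmt_16 (n : ℕ) (G1 G2 : Set (Fin n → ℂ))
    (hop1 : IsOpen G1) (hconn1 : IsConnected G1) (hbd1 : Bornology.IsBounded G1)
    (hne1 : G1.Nonempty)
    (hcirc1 : ∀ z ∈ G1, ∀ w : Fin n → ℂ, (∀ j, ‖w j‖ ≤ ‖z j‖) → w ∈ G1)
    (hop2 : IsOpen G2) (hconn2 : IsConnected G2) (hbd2 : Bornology.IsBounded G2)
    (hne2 : G2.Nonempty)
    (hcirc2 : ∀ z ∈ G2, ∀ w : Fin n → ℂ, (∀ j, ‖w j‖ ≤ ‖z j‖) → w ∈ G2)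
    (ρ : (Fin n → ℕ) → Fin n → ℝ)
    (hρ : ∀ k : Fin n → ℕ, k ≠ 0 → Finset.univ.gcd k = 1 →
      (∀ j, 0 < ρ k j) ∧ {z : Fin n → ℂ | ∀ j, ‖z j‖ < ρ k j} ⊆ G1 ∧
        ∀ z ∈ G1, ‖∏ j, z j ^ k j‖ ≤ ∏ j, ρ k j ^ k j)
    (hexp : ∀ f : (Fin n → ℂ) → ℂ, DifferentiableOn ℂ f G1 →
      ∃ c : (Fin n → ℕ) → ℂ, ∀ z ∈ G1,
        Summable (fun m : Fin n → ℕ => ‖c m * ∏ j, z j ^ m j‖) ∧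
        HasSum (fun m : Fin n → ℕ => c m * ∏ j, z j ^ m j) (f z))
    (A : (Fin n → ℕ) → ((Fin n → ℂ) → ℂ) →ₗ[ℂ] ((Fin n → ℂ) → ℂ))
    (hA1 : ∀ k : Fin n → ℕ, k ≠ 0 → Finset.univ.gcd k = 1 →
      ∀ f : (Fin n → ℂ) → ℂ,
        DifferentiableOn ℂ f {z : Fin n → ℂ | ∀ j, ‖z j‖ < ρ k j} →
        DifferentiableOn ℂ (A k f) G2)
    (hA2 : ∀ t ∈ Set.Ioo (0 : ℝ) 1, ∃ C > (0 : ℝ), ∃ s ∈ Set.Ioo (0 : ℝ) 1,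
      ∀ k : Fin n → ℕ, k ≠ 0 → Finset.univ.gcd k = 1 →
      ∀ f : (Fin n → ℂ) → ℂ,
        DifferentiableOn ℂ f {z : Fin n → ℂ | ∀ j, ‖z j‖ < ρ k j} →
        (⨆ z ∈ t • closure G2, ‖A k f z‖) ≤
          C * ⨆ z ∈ s • closure {z : Fin n → ℂ | ∀ j, ‖z j‖ < ρ k j}, ‖f z‖) :
    ∃ B : ((Fin n → ℂ) → ℂ) →ₗ[ℂ] ((Fin n → ℂ) → ℂ),
      (∀ f : (Fin n → ℂ) → ℂ,
        DifferentiableOn ℂ f G1 → DifferentiableOn ℂ (B f) G2) ∧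
      (∀ t ∈ Set.Ioo (0 : ℝ) 1, ∃ C' > (0 : ℝ), ∃ r ∈ Set.Ioo (0 : ℝ) 1,
        ∀ f : (Fin n → ℂ) → ℂ, DifferentiableOn ℂ f G1 →
          (⨆ z ∈ t • closure G2, ‖B f z‖) ≤ C' * ⨆ z ∈ r • closure G1, ‖f z‖) ∧
      (∀ k : Fin n → ℕ, k ≠ 0 → Finset.univ.gcd k = 1 →
        ∀ f : (Fin n → ℂ) → ℂ, DifferentiableOn ℂ f G1 →
          (∃ c : ℕ → ℂ, ∀ z ∈ G1,
            Summable (fun l : ℕ => ‖c (l + 1) * ∏ j, z j ^ ((l + 1) * k j)‖) ∧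
            HasSum (fun l : ℕ => c (l + 1) * ∏ j, z j ^ ((l + 1) * k j)) (f z)) →
          ∀ z ∈ G2, B f z = A k f z) := by
  classical
  choose! cf hcf0 using hexp
  have hcf : ∀ f, DifferentiableOn ℂ f G1 → ∀ z ∈ G1,
      HasSum (fun m : Fin n → ℕ => cf f m * ∏ j, z j ^ m j) (f z) :=
    fun f hf z hz => (hcf0 f hf z hz).2
  have cf_eq : ∀ f, DifferentiableOn ℂ f G1 → ∀ d : (Fin n → ℕ) → ℂ,
      (∀ z ∈ G1, HasSum (fun m : Fin n → ℕ => d m * ∏ j, z j ^ m j) (f z)) → cf f = d :=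
    fun f hf d hd => coeff_unique hop1 hne1 hcirc1 (hcf f hf) hd
  have cf_add : ∀ f g, DifferentiableOn ℂ f G1 → DifferentiableOn ℂ g G1 →
      cf (f + g) = cf f + cf g := by
    intro f g hf hg
    refine cf_eq _ (hf.add hg) _ fun z hz => ?_
    simpa [add_mul] using (hcf f hf z hz).add (hcf g hg z hz)
  have cf_smul : ∀ (a : ℂ) f, DifferentiableOn ℂ f G1 → cf (a • f) = a • cf f := by
    intro a f hf
    refine cf_eq _ (hf.const_smul a) _ fun z hz => ?_
    simpa [mul_assoc] using (hcf f hf z hz).mul_left a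
  have psum : ∀ f, DifferentiableOn ℂ f G1 → ∀ k : Fin n → ℕ, k ≠ 0 → ∀ z ∈ G1,
      Summable (fun l : ℕ => cf f (fun j => (l + 1) * k j) * ∏ j, z j ^ ((l + 1) * k j)) :=
    fun f hf k hk z hz => (hcf f hf z hz).summable.comp_injective (mul_inj hk)
  let Q : (Fin n → ℕ) → ((Fin n → ℂ) → ℂ) → (Fin n → ℂ) → ℂ :=
    fun k f => G1.indicator (part (cf f) k)
  have Q_add : ∀ k : Fin n → ℕ, k ≠ 0 → ∀ f g, DifferentiableOn ℂ f G1 →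
      DifferentiableOn ℂ g G1 → Q k (f + g) = Q k f + Q k g := by
    intro k hk f g hf hg
    funext z
    by_cases hz : z ∈ G1
    · simp only [Q, Pi.add_apply, Set.indicator_of_mem hz, part]
      rw [← (psum f hf k hk z hz).tsum_add (psum g hg k hk z hz), cf_add f g hf hg]
      simp only [Pi.add_apply, add_mul]
    · simp [Q, hz]
  have Q_smul : ∀ k : Fin n → ℕ, ∀ (a : ℂ) f, DifferentiableOn ℂ f G1 →
      Q k (a • f) = a • Q k f := by
    intro k a f hf
    funext z
    by_cases hz : z ∈ G1
    · simp only [Q, Pi.smul_apply, Set.indicator_of_mem hz, part, smul_eq_mul]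
      rw [← tsum_mul_left, cf_smul a f hf]
      simp only [Pi.smul_apply, smul_eq_mul, mul_assoc]
    · simp [Q, hz]
  have Q_diff : ∀ k : Fin n → ℕ, k ≠ 0 → ∀ f, DifferentiableOn ℂ f G1 →
      DifferentiableOn ℂ (Q k f) G1 := by
    intro k hk f hf
    exact (part_diff hop1 hcirc1 (hcf f hf) hk).congr fun z hz => by simp [Q, hz]
  -- closure of the polydiscs
  have hPcl : ∀ k : Fin n → ℕ, k ≠ 0 → Finset.univ.gcd k = 1 →
      closure {z : Fin n → ℂ | ∀ j, ‖z j‖ < ρ k j} = {z | ∀ j, ‖z j‖ ≤ ρ k j} := by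
    intro k hk hk1
    have h1 : {z : Fin n → ℂ | ∀ j, ‖z j‖ < ρ k j}
        = Set.pi Set.univ (fun j => Metric.ball (0:ℂ) (ρ k j)) := by
      ext z; simp [Set.mem_pi]
    rw [h1, closure_pi_set]
    ext z
    simp [Set.mem_pi, closure_ball (0:ℂ) ((hρ k hk hk1).1 _).ne']
  have hPcirc : ∀ k : Fin n → ℕ, ∀ z ∈ {z : Fin n → ℂ | ∀ j, ‖z j‖ < ρ k j},
      ∀ w : Fin n → ℂ, (∀ j, ‖w j‖ ≤ ‖z j‖) → w ∈ {z : Fin n → ℂ | ∀ j, ‖z j‖ < ρ k j} :=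
    fun k z hz w hw j => (hw j).trans_lt (hz j)
  let T : (Fin n → ℕ) → ((Fin n → ℂ) → ℂ) → (Fin n → ℂ) → ℂ :=
    fun k f z => if k ≠ 0 ∧ Finset.univ.gcd k = 1 then A k (Q k f) z else 0
  have bound : ∀ t ∈ Set.Ioo (0:ℝ) 1, ∃ C > (0:ℝ), ∃ r ∈ Set.Ioo (0:ℝ) 1, ∀ f,
      DifferentiableOn ℂ f G1 → ∀ z ∈ t • closure G2, ∀ k,
        ‖T k f z‖ ≤ C * (⨆ z ∈ r • closure G1, ‖f z‖) * r ^ (∑ j, k j) := by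
    intro t ht
    obtain ⟨C, hC, s, hs, hA⟩ := hA2 t ht
    have hr : Real.sqrt s ∈ Set.Ioo (0:ℝ) 1 :=
      ⟨Real.sqrt_pos.2 hs.1, by rw [Real.sqrt_lt' one_pos]; simpa using hs.2⟩
    have hrr : Real.sqrt s * Real.sqrt s = s := Real.mul_self_sqrt hs.1.le
    set r := Real.sqrt s
    have h1r : 0 < (1 - r)⁻¹ := inv_pos.2 (by linarith [hr.2])
    have hr0 := hr.1
    refine ⟨C * (1 - r)⁻¹, by positivity, r, hr, ?_⟩
    intro f hf z hz k
    set N := ⨆ z ∈ r • closure G1, ‖f z‖ with hNdef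
    have hfN : ∀ w ∈ r • closure G1, ‖f w‖ ≤ N := fun w hw =>
      le_biSup_aux (f := fun w => ‖f w‖) (bdd_on hbd1 hcirc1 hr hf) hw
    have hN0 : 0 ≤ N := Real.iSup_nonneg fun z => Real.iSup_nonneg fun _ => norm_nonneg _
    by_cases hkM : k ≠ 0 ∧ Finset.univ.gcd k = 1
    swap
    · simp only [T, if_neg hkM, norm_zero]
      positivity
    obtain ⟨hk, hk1⟩ := hkM
    obtain ⟨hρ0, hρG, -⟩ := hρ k hk hk1
    have hmem : ∀ w : Fin n → ℂ, (∀ j, ‖w j‖ = r * ρ k j) → w ∈ r • closure G1 := by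
      intro w hw
      rw [Set.mem_smul_set_iff_inv_smul_mem₀ hr.1.ne']
      apply closure_mono hρG
      rw [hPcl k hk hk1]
      intro j
      simp only [Pi.smul_apply, norm_smul, hw, norm_inv, Real.norm_eq_abs, abs_of_pos hr0]
      rw [inv_mul_cancel_left₀ hr0.ne']
    have hcoef : ∀ m : Fin n → ℕ, ‖cf f m‖ * ∏ j, (r * ρ k j) ^ m j ≤ N := by
      have hx0 : ∀ j, 0 ≤ r * ρ k j := fun j => mul_nonneg hr0.le (hρ0 j).le
      refine cauchy_bound hcirc1 (hcf f hf) (x := fun j => r * ρ k j) hx0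
        (smul_closure_sub_dom hcirc1 hr (hmem _ fun j => ?_)) (fun w hw => hfN w (hmem w hw))
      rw [Complex.norm_real, Real.norm_eq_abs, abs_of_nonneg (hx0 j)]
    have hQP : DifferentiableOn ℂ (Q k f) {z : Fin n → ℂ | ∀ j, ‖z j‖ < ρ k j} :=
      (Q_diff k hk f hf).mono hρG
    have h1 := hA k hk hk1 (Q k f) hQP
    have h2 : (⨆ z ∈ s • closure {z : Fin n → ℂ | ∀ j, ‖z j‖ < ρ k j}, ‖Q k f z‖) ≤
        N * (r ^ (∑ j, k j) * (1 - r)⁻¹) := by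
      refine biSup_le_aux (by positivity) fun w hw => ?_
      have hwP := smul_closure_sub_dom (hPcirc k) hs hw
      simp only [Q, Set.indicator_of_mem (hρG hwP)]
      refine part_bound hk hr hN0 hcoef ?_
      rw [hPcl k hk hk1] at hw
      obtain ⟨v, hv, rfl⟩ := hw
      intro j
      simp only [Pi.smul_apply, norm_smul, Real.norm_eq_abs, abs_of_pos hs.1, hrr]
      exact mul_le_mul_of_nonneg_left (hv j) hs.1.le
    have h3 : ‖A k (Q k f) z‖ ≤ ⨆ z ∈ t • closure G2, ‖A k (Q k f) z‖ :=
      le_biSup_aux (f := fun w => ‖A k (Q k f) w‖)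
        (bdd_on hbd2 hcirc2 ht (hA1 k hk hk1 _ hQP)) hz
    simp only [T]
    rw [if_pos ⟨hk, hk1⟩]
    calc _ ≤ _ := h3
      _ ≤ _ := h1
      _ ≤ C * (N * (r ^ (∑ j, k j) * (1 - r)⁻¹)) := mul_le_mul_of_nonneg_left h2 hC.le
      _ = _ := by ring
  have T_sum : ∀ f, DifferentiableOn ℂ f G1 → ∀ z ∈ G2, Summable (fun k => T k f z) := by
    intro f hf z hz
    obtain ⟨t, ht, hzt⟩ := exists_smul hop2 hz
    obtain ⟨C, hC, r, hr, hb⟩ := bound t ht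
    exact Summable.of_norm_bounded ((summable_geom_multi n r hr.1.le hr.2).mul_left _)
      (hb f hf z (Set.smul_set_mono subset_closure hzt))
  have T_diff : ∀ k f, DifferentiableOn ℂ f G1 → DifferentiableOn ℂ (T k f) G2 := by
    intro k f hf
    by_cases hkM : k ≠ 0 ∧ Finset.univ.gcd k = 1
    · simp only [T, if_pos hkM]
      exact hA1 k hkM.1 hkM.2 _ ((Q_diff k hkM.1 f hf).mono (hρ k hkM.1 hkM.2).2.1)
    · simp only [T, if_neg hkM]
      exact differentiableOn_const _
  let H : Submodule ℂ ((Fin n → ℂ) → ℂ) :=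
    { carrier := {f | DifferentiableOn ℂ f G1}
      add_mem' := fun hf hg => DifferentiableOn.add hf hg
      zero_mem' := differentiableOn_const _
      smul_mem' := fun a _ hf => DifferentiableOn.const_smul hf a }
  let B0 : H →ₗ[ℂ] ((Fin n → ℂ) → ℂ) :=
    { toFun := fun f => G2.indicator (fun z => ∑' k, T k f z)
      map_add' := by
        rintro ⟨f, hf⟩ ⟨g, hg⟩
        funext z
        by_cases hz : z ∈ G2
        · simp only [Pi.add_apply, Set.indicator_of_mem hz]
          rw [← (T_sum f hf z hz).tsum_add (T_sum g hg z hz)]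
          refine tsum_congr fun k => ?_
          by_cases hkM : k ≠ 0 ∧ Finset.univ.gcd k = 1
          · simp only [T, if_pos hkM]
            rw [Submodule.coe_add, Q_add k hkM.1 f g hf hg, map_add, Pi.add_apply]
          · simp only [T, if_neg hkM, add_zero]
        · simp [hz]
      map_smul' := by
        rintro a ⟨f, hf⟩
        funext z
        by_cases hz : z ∈ G2
        · simp only [Pi.smul_apply, Set.indicator_of_mem hz, smul_eq_mul, RingHom.id_apply]
          rw [← tsum_mul_left]
          refine tsum_congr fun k => ?_
          by_cases hkM : k ≠ 0 ∧ Finset.univ.gcd k = 1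
          · simp only [T, if_pos hkM]
            rw [Submodule.coe_smul, Q_smul k a f hf, map_smul, Pi.smul_apply, smul_eq_mul]
          · simp only [T, if_neg hkM, mul_zero]
        · simp [hz] }
  obtain ⟨B, hB⟩ := LinearMap.exists_extend B0
  have hBf : ∀ f, DifferentiableOn ℂ f G1 → ∀ z ∈ G2, B f z = ∑' k, T k f z := by
    intro f hf z hz
    have h1 : B f = B0 ⟨f, hf⟩ := by rw [← hB]; rfl
    rw [h1]
    change G2.indicator (fun z => ∑' k, T k f z) z = _
    rw [Set.indicator_of_mem hz]
  refine ⟨B, ?_, ?_, ?_⟩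
  · intro f hf
    refine DifferentiableOn.congr ?_ (hBf f hf)
    refine differentiableOn_tsum_local (fun k => T k f) G2 (fun k => T_diff k f hf) ?_
    intro z hz
    obtain ⟨t, ht, hzt⟩ := exists_smul hop2 hz
    obtain ⟨C, hC, r, hr, hb⟩ := bound t ht
    have hsub : t • G2 ⊆ t • closure G2 := Set.smul_set_mono subset_closure
    exact ⟨t • G2, hsub.trans (smul_closure_sub_dom hcirc2 ht), hop2.smul₀ ht.1.ne', hzt, _,
      (summable_geom_multi n r hr.1.le hr.2).mul_left _, fun k w hw => hb f hf w (hsub hw) k⟩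
  · intro t ht
    obtain ⟨C, hC, r, hr, hb⟩ := bound t ht
    have hS := summable_geom_multi n r hr.1.le hr.2
    have hS0 : 0 < ∑' m : Fin n → ℕ, r ^ (∑ j, m j) :=
      hS.tsum_pos (fun m => pow_nonneg hr.1.le _) 0 (by simp)
    refine ⟨C * ∑' m : Fin n → ℕ, r ^ (∑ j, m j), by positivity, r, hr, ?_⟩
    intro f hf
    have hN0 : 0 ≤ ⨆ z ∈ r • closure G1, ‖f z‖ :=
      Real.iSup_nonneg fun z => Real.iSup_nonneg fun _ => norm_nonneg _
    refine biSup_le_aux (by positivity) fun z hz => ?_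
    rw [hBf f hf z (smul_closure_sub_dom hcirc2 ht hz)]
    refine (tsum_of_norm_bounded (hS.hasSum.mul_left _) (hb f hf z hz)).trans (le_of_eq ?_)
    ring
  · rintro k hk hk1 f hf ⟨c, hc⟩ z hz
    have hinj := mul_inj hk
    let d : (Fin n → ℕ) → ℂ :=
      Function.extend (fun l : ℕ => fun j => (l + 1) * k j) (fun l => c (l + 1)) 0
    have hd1 : ∀ l, d (fun j => (l + 1) * k j) = c (l + 1) := fun l => hinj.extend_apply _ _ l
    have hd0 : ∀ m, m ∉ Set.range (fun l : ℕ => fun j => (l + 1) * k j) → d m = 0 :=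
      fun m hm => Function.extend_apply' _ _ _ hm
    have hcd : cf f = d := by
      refine cf_eq f hf d fun w hw => ?_
      rw [← hinj.hasSum_iff]
      · refine (hc w hw).2.congr_fun fun l => ?_
        simp only [Function.comp, hd1]
      · intro m hm
        rw [hd0 m hm, zero_mul]
    rw [hBf f hf z hz, tsum_eq_single k]
    · simp only [T, if_pos (And.intro hk hk1)]
      obtain ⟨t, ht, hzt⟩ := exists_smul hop2 hz
      have hzt' : z ∈ t • closure G2 := Set.smul_set_mono subset_closure hzt
      obtain ⟨C, hC, s, hs, hA⟩ := hA2 t ht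
      have hdiff : DifferentiableOn ℂ (Q k f - f) {z : Fin n → ℂ | ∀ j, ‖z j‖ < ρ k j} :=
        ((Q_diff k hk f hf).sub hf).mono (hρ k hk hk1).2.1
      have h1 := hA k hk hk1 _ hdiff
      have h2 : (⨆ z ∈ s • closure {z : Fin n → ℂ | ∀ j, ‖z j‖ < ρ k j}, ‖(Q k f - f) z‖) ≤ 0 := by
        refine biSup_le_aux le_rfl fun w hw => ?_
        have hwG := (hρ k hk hk1).2.1 (smul_closure_sub_dom (hPcirc k) hs hw)
        have : Q k f w = f w := by
          simp only [Q, Set.indicator_of_mem hwG, part, hcd, hd1]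
          exact (hc w hwG).2.tsum_eq
        simp [this]
      have h3 : ‖A k (Q k f - f) z‖ ≤ ⨆ z ∈ t • closure G2, ‖A k (Q k f - f) z‖ :=
        le_biSup_aux (f := fun w => ‖A k (Q k f - f) w‖)
          (bdd_on hbd2 hcirc2 ht (hA1 k hk hk1 _ hdiff)) hzt'
      have h4 : ‖A k (Q k f - f) z‖ ≤ 0 := by nlinarith
      rw [map_sub, Pi.sub_apply] at h4
      exact sub_eq_zero.1 (norm_le_zero_iff.1 h4)
    · intro k' hkk
      by_cases hkM : k' ≠ 0 ∧ Finset.univ.gcd k' = 1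
      · simp only [T, if_pos hkM]
        have : Q k' f = 0 := by
          funext w
          have h0 : ∀ l : ℕ, cf f (fun j => (l + 1) * k' j) = 0 := by
            intro l
            rw [hcd]
            refine hd0 _ ?_
            rintro ⟨l', hl'⟩
            exact hkk (mul_prim hk1 hkM.2 hl').symm
          simp [Q, part, h0, Set.indicator]
        rw [this, map_zero, Pi.zero_apply]
      · simp only [T, if_neg hkM]
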